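/- arXiv:math/0402241 — 3 statements merged into one kernel-verified Lean document; each statement's English description precedes it below -/
import Mathlib

section
/- Let G be a group and H a normal subgroup of G which is finitely generated and residually finite. Let H₁ be an abelian characteristic subgroup of finite index in H, and let Z be the centralizer of H₁ in H. Then G has a normal subgroup G' of finite index in G such that G' ∩ H is contained in the subgroup Z·H₁ generated by Z and H₁. -/
/-!
Let `S ⊆ H` have centralizer `Z` of finite index. For `x ∈ S` the commutator `⁅h, x⁆` depends only
on the coset `h Z`, so residual finiteness, applied to one nontrivial commutator for each nontrivial
coset, gives a finite-index normal subgroup `N` of `H` such that every `h` centralizing `S` modulo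
`N` already lies in `Z`. As `H` is finitely generated, there are only finitely many homomorphisms
`H →* H ⧸ N`, so a finite-index normal subgroup `G'` of `G` fixes them all; its elements act
trivially on `H ⧸ N`, and therefore those lying in `H` belong to `Z`.
-/

theorem finite_monoidHom_of_fg (M N : Type*) [Monoid M] [Monoid.FG M] [MulOneClass N] [Finite N] :
    Finite (M →* N) := by
  obtain ⟨S, hS⟩ := Monoid.fg_def.1 ‹Monoid.FG M›
  refine Finite.of_injective (fun (φ : M →* N) (s : S) => φ s) fun φ ψ h => ?_
  exact MonoidHom.eq_of_eqOn_denseM hS fun s hs => congrFun h ⟨s, hs⟩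

theorem exists_finiteIndexNormalSubgroup_map_smul_eq (G M N : Type*) [Group G] [Monoid M]
    [Monoid.FG M] [MulDistribMulAction G M] [MulOneClass N] [Finite N] :
    ∃ K : FiniteIndexNormalSubgroup G, ∀ g ∈ K, ∀ (φ : M →* N) (x : M), φ (g • x) = φ x := by
  have := finite_monoidHom_of_fg M N
  -- Precomposition is a right action of `G`, made into a left action by inverting `g`.
  let act : G →* Equiv.Perm (M →* N) :=
    (MulAction.toPermHom Gᵈᵐᵃ (M →* N)).comp (MulEquiv.inv' G).toMonoidHom
  refine ⟨.ofSubgroup act.ker, fun g hg φ x => ?_⟩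
  have hfix : act g⁻¹ φ = φ := by rw [MonoidHom.mem_ker.1 (inv_mem hg), Equiv.Perm.one_apply]
  have happly : φ (g⁻¹⁻¹ • x) = φ x := DFunLike.congr_fun hfix x
  rwa [inv_inv] at happly

section Commutator

open scoped commutatorElement

theorem commutatorElement_mul_left_of_commute {G : Type*} [Group G] (a : G) {b c : G}
    (h : Commute b c) : ⁅a * b, c⁆ = ⁅a, c⁆ := by
  rw [commutatorElement_mul_left_eq_conj_mul, h.commutator_eq, mul_one, mul_inv_cancel, one_mul]

variable {H : Type*} [Group H] [Group.ResiduallyFinite H] (S : Set H)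

theorem exists_finiteIndexNormalSubgroup_mem_centralizer_of_mul (k : H) :
    ∃ N : FiniteIndexNormalSubgroup H, ∀ z ∈ Subgroup.centralizer S,
      (∀ x ∈ S, ⁅k * z, x⁆ ∈ N) → k ∈ Subgroup.centralizer S := by
  by_cases hk : k ∈ Subgroup.centralizer S
  · exact ⟨.ofSubgroup ⊤, fun _ _ _ => hk⟩
  · obtain ⟨x, hx, hkx⟩ : ∃ x ∈ S, ⁅k, x⁆ ≠ 1 := by
      simpa only [Subgroup.mem_centralizer_iff_commutator_eq_one', not_forall, exists_prop] using hk
    obtain ⟨N, hN⟩ := Group.exists_finiteIndexNormalSubgroup_notMem ⁅k, x⁆ hkx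
    refine ⟨N, fun z hz hcomm => (hN ?_).elim⟩
    have hzx : Commute z x := (Subgroup.mem_centralizer_iff.1 hz x hx).symm
    exact commutatorElement_mul_left_of_commute k hzx ▸ hcomm x hx

theorem exists_finiteIndexNormalSubgroup_mem_centralizer [(Subgroup.centralizer S).FiniteIndex] :
    ∃ N : FiniteIndexNormalSubgroup H,
      ∀ h : H, (∀ x ∈ S, ⁅h, x⁆ ∈ N) → h ∈ Subgroup.centralizer S := by
  set Z := Subgroup.centralizer S
  choose N hN using exists_finiteIndexNormalSubgroup_mem_centralizer_of_mul S
  let M : Subgroup H := ⨅ q : H ⧸ Z, (N q.out).toSubgroup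
  have : M.Normal := Subgroup.normal_iInf_normal fun q => (N q.out).isNormal'
  have : M.FiniteIndex := Subgroup.finiteIndex_iInf fun q => (N q.out).isFiniteIndex'
  refine ⟨.ofSubgroup M, fun h hcomm => ?_⟩
  obtain ⟨k, z, hz, rfl, hle⟩ : ∃ k, ∃ z ∈ Z, k * z = h ∧ M ≤ (N k).toSubgroup :=
    ⟨(h : H ⧸ Z).out, _, QuotientGroup.eq.1 (QuotientGroup.out_eq' (h : H ⧸ Z)),
      mul_inv_cancel_left _ h, iInf_le _ _⟩
  exact Z.mul_mem (hN k z hz fun x hx => hle (hcomm x hx)) hz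

end Commutator

theorem stmt0_general {G : Type*} [Group G] (H : Subgroup G) [H.Normal] [Group.FG H]
    [Group.ResiduallyFinite H] (S : Set H) [(Subgroup.centralizer S).FiniteIndex] :
    ∃ G' : Subgroup G, G'.Normal ∧ G'.FiniteIndex ∧
      G' ⊓ H ≤ (Subgroup.centralizer S).map H.subtype := by
  obtain ⟨N, hN⟩ := exists_finiteIndexNormalSubgroup_mem_centralizer S
  obtain ⟨K, hK⟩ :=
    exists_finiteIndexNormalSubgroup_map_smul_eq (MulAut H) H (H ⧸ N.toSubgroup)
  refine ⟨(K.comap MulAut.conjNormal).toSubgroup, inferInstance, inferInstance, ?_⟩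
  rintro g ⟨hgK, hgH⟩
  lift g to H using hgH
  have hconj : MulAut.conj g ∈ K := MulAut.conjNormal_val (h := g) ▸ hgK
  refine Subgroup.mem_map_of_mem H.subtype (hN g fun x _ => ?_)
  have hmod : ((g * x * g⁻¹ : H) : H ⧸ N.toSubgroup) = x :=
    hK _ hconj (QuotientGroup.mk' N.toSubgroup) x
  rw [commutatorElement_def, ← div_eq_mul_inv]
  exact QuotientGroup.eq_iff_div_mem.1 hmod

/-- Proposition 3.3.0(1), first assertion: if `H` is a finitely generated,
residually finite normal subgroup of `G`, and `H₁` is an abelian characteristic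
subgroup of finite index in `H` with centralizer `Z` in `H`, then `G` has a
normal finite-index subgroup `G'` with `G' ∩ H ⊆ Z·H₁`. -/
theorem stmt0 (G : Type*) [Group G] (H : Subgroup G) [H.Normal]
    (hFG : Group.FG H)
    (hRF : ∀ h : H, h ≠ 1 → ∃ N : Subgroup H, N.Normal ∧ N.FiniteIndex ∧ h ∉ N)
    (H₁ : Subgroup H) [H₁.Characteristic] [H₁.FiniteIndex]
    (hab : ∀ x ∈ H₁, ∀ y ∈ H₁, x * y = y * x) :
    ∃ G' : Subgroup G, G'.Normal ∧ G'.FiniteIndex ∧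
      G' ⊓ H ≤ (Subgroup.centralizer (H₁ : Set H) ⊔ H₁).map H.subtype := by
  have : Group.ResiduallyFinite H :=
    Group.residuallyFinite_iff_exists_finiteIndex.2 fun h hh => (hRF h hh).imp fun _ hN => hN.2
  have hle : H₁ ≤ Subgroup.centralizer (H₁ : Set H) := fun x hx y hy => hab y hy x hx
  have : (Subgroup.centralizer (H₁ : Set H)).FiniteIndex := Subgroup.finiteIndex_of_le hle
  simpa only [sup_eq_left.2 hle] using stmt0_general H (H₁ : Set H)
end

section
/- Let G be a group and H a normal subgroup of G which is finitely generated and residually finite. Let H₁ be an abelian, torsion-free, characteristic subgroup of finite index in H. Then G has a normal subgroup G' of finite index in G such that G' ∩ H is abelian. -/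
/-!
Let `C` be the centralizer in `H` of the abelian subgroup `H₁`. It contains `H₁`, so it has finite
index in `H` and is finitely generated. Each of its generators `t` commutes with `H₁`, hence has
only finitely many conjugates in `H`, and so there are only finitely many commutators `⁅x, t⁆` with
`x ∈ H`. Residual finiteness provides a finite quotient `φ : H → F` that kills none of the
nontrivial ones. If `φ x` is central in `F`, then `x` centralizes `C`; as `H₁ ≤ C`, this puts `x`
in `C` as well, so any two such elements commute.

Since `H` is finitely generated, there are only finitely many homomorphisms `H → F`, and `G`
permutes them by conjugation on `H`. Let `G'` be the kernel of this action. For `x ∈ G' ∩ H` we have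
`φ (x * z * x⁻¹) = φ z` for all `z ∈ H`, so `φ x` is central in `F = φ(H)`.
-/

open Subgroup
open scoped commutatorElement

section FiniteQuotients

variable {Γ : Type*} [Group Γ]

theorem exists_finiteIndexNormalSubgroup_forall_mem_imp_eq_one [Group.ResiduallyFinite Γ]
    {S : Set Γ} (hS : S.Finite) :
    ∃ N : FiniteIndexNormalSubgroup Γ, ∀ s ∈ S, s ∈ N → s = 1 := by
  induction S, hS using Set.Finite.induction_on with
  | empty => exact ⟨.ofSubgroup ⊤, by simp⟩
  | @insert a S _ _ ih =>
    obtain ⟨N, hN⟩ := ih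
    by_cases ha : a = 1
    · exact ⟨N, Set.forall_mem_insert.mpr ⟨fun _ ↦ ha, hN⟩⟩
    · obtain ⟨M, haM⟩ := Group.exists_finiteIndexNormalSubgroup_notMem a ha
      exact ⟨M ⊓ N, Set.forall_mem_insert.mpr
        ⟨fun h ↦ absurd h.1 haM, fun s hs h ↦ hN s hs h.2⟩⟩

theorem finite_range_commutatorElement (g : Γ) [(centralizer {g}).FiniteIndex] :
    (Set.range fun x : Γ ↦ ⁅x, g⁆).Finite := by
  refine (Set.finite_range fun q ↦ (quotientCentralizerEmbedding g q : Γ)).subset ?_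
  rintro _ ⟨x, rfl⟩
  exact ⟨x, rfl⟩

theorem exists_finiteIndexNormalSubgroup_mem_centralizer_s2 [Group.ResiduallyFinite Γ]
    {T : Set Γ} (hT : T.Finite) (hcent : ∀ t ∈ T, (centralizer {t}).FiniteIndex) :
    ∃ N : FiniteIndexNormalSubgroup Γ, ∀ x, (∀ t ∈ T, ⁅x, t⁆ ∈ N) → x ∈ centralizer T := by
  have hfin : (⋃ t ∈ T, Set.range fun x : Γ ↦ ⁅x, t⁆).Finite := hT.biUnion fun t ht ↦
    have := hcent t ht
    finite_range_commutatorElement t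
  obtain ⟨N, hN⟩ := exists_finiteIndexNormalSubgroup_forall_mem_imp_eq_one hfin
  refine ⟨N, fun x hx ↦ mem_centralizer_iff_commutator_eq_one'.mpr fun t ht ↦ ?_⟩
  exact hN _ (Set.mem_biUnion ht ⟨x, rfl⟩) (hx t ht)

theorem isMulCommutative_centralizer_centralizer (A : Subgroup Γ) [IsMulCommutative A] :
    IsMulCommutative (centralizer (centralizer (A : Set Γ) : Set Γ)) :=
  le_centralizer_iff_isMulCommutative.mp <|
    centralizer_le <| centralizer_le A.le_centralizer

theorem exists_isMulCommutative_comap_center [Group.FG Γ] [Group.ResiduallyFinite Γ]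
    (A : Subgroup Γ) [A.FiniteIndex] [IsMulCommutative A] :
    ∃ N : FiniteIndexNormalSubgroup Γ,
      IsMulCommutative ((center (Γ ⧸ N.toSubgroup)).comap (QuotientGroup.mk' N.toSubgroup)) := by
  let C := centralizer (A : Set Γ)
  have : C.FiniteIndex := finiteIndex_of_le A.le_centralizer
  obtain ⟨T, hTC, hT⟩ := (fg_iff C).mp <| (Group.fg_iff_subgroup_fg C).mp inferInstance
  have hcent : ∀ t ∈ T, (centralizer {t}).FiniteIndex := fun t ht ↦ by
    have htC : t ∈ C := hTC ▸ subset_closure ht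
    refine finiteIndex_of_le (H := A) fun a ha ↦ mem_centralizer_singleton_iff.mpr ?_
    exact mem_centralizer_iff.mp htC a ha
  obtain ⟨N, hN⟩ := exists_finiteIndexNormalSubgroup_mem_centralizer_s2 hT hcent
  have hle : (center (Γ ⧸ N.toSubgroup)).comap (QuotientGroup.mk' _) ≤ centralizer C := by
    intro x hx
    rw [← hTC, centralizer_closure]
    refine hN x fun t _ ↦ (QuotientGroup.eq_one_iff (N := N.toSubgroup) ⁅x, t⁆).mp ?_
    exact commutatorElement_eq_one_iff_mul_comm.mpr (mem_center_iff.mp hx t).symm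
  have := isMulCommutative_centralizer_centralizer A
  exact ⟨N, .of_setLike_mul_comm fun x hx y hy ↦ setLike_mul_comm (hle hx) (hle hy)⟩

end FiniteQuotients

section ActionOnHoms

theorem finite_monoidHom_of_fg_s2 (Γ F : Type*) [Group Γ] [Group.FG Γ] [Monoid F] [Finite F] :
    Finite (Γ →* F) := by
  obtain ⟨S, hS, hfin⟩ := Group.fg_iff.mp ‹Group.FG Γ›
  have : Finite S := hfin
  refine Finite.of_injective (fun (φ : Γ →* F) (s : S) ↦ φ s) fun φ ψ h ↦ ?_
  exact MonoidHom.eq_of_eqOn_dense hS fun s hs ↦ congrFun h ⟨s, hs⟩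

/-- The action of the automorphisms of `Γ` on the homomorphisms `Γ →* F`. To be a left action, `α`
sends `φ` to `φ ∘ α⁻¹`. -/
def mulAutPermHoms (Γ F : Type*) [Group Γ] [Monoid F] : MulAut Γ →* Equiv.Perm (Γ →* F) where
  toFun α := α.monoidHomCongrLeftEquiv
  map_one' := rfl
  map_mul' _ _ := rfl

theorem apply_eq_of_mem_ker_mulAutPermHoms {Γ F : Type*} [Group Γ] [Monoid F] {α : MulAut Γ}
    (hα : α ∈ (mulAutPermHoms Γ F).ker) (φ : Γ →* F) (x : Γ) : φ (α x) = φ x := by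
  have h : mulAutPermHoms Γ F α φ = φ := by rw [MonoidHom.mem_ker.mp hα, Equiv.Perm.one_apply]
  calc φ (α x) = mulAutPermHoms Γ F α φ (α x) := by rw [h]
    _ = φ x := congrArg φ (α.symm_apply_apply x)

theorem exists_normal_finiteIndex_map_conjNormal_eq {G : Type*} [Group G] (H : Subgroup G)
    [H.Normal] [Group.FG H] (F : Type*) [Monoid F] [Finite F] :
    ∃ G' : Subgroup G, G'.Normal ∧ G'.FiniteIndex ∧
      ∀ g ∈ G', ∀ (φ : H →* F) (x : H), φ (MulAut.conjNormal g x) = φ x := by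
  have := finite_monoidHom_of_fg_s2 H F
  let f : G →* Equiv.Perm (H →* F) := (mulAutPermHoms H F).comp MulAut.conjNormal
  exact ⟨f.ker, inferInstance, finiteIndex_ker f, fun _ hg ↦ apply_eq_of_mem_ker_mulAutPermHoms hg⟩

theorem exists_normal_finiteIndex_mem_comap_center {G : Type*} [Group G] (H : Subgroup G)
    [H.Normal] [Group.FG H] (N : Subgroup H) [N.Normal] [N.FiniteIndex] :
    ∃ G' : Subgroup G, G'.Normal ∧ G'.FiniteIndex ∧
      ∀ x : H, (x : G) ∈ G' → x ∈ (center (H ⧸ N)).comap (QuotientGroup.mk' N) := by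
  obtain ⟨G', hnormal, hindex, hG'⟩ := exists_normal_finiteIndex_map_conjNormal_eq H (H ⧸ N)
  refine ⟨G', hnormal, hindex, fun x hx ↦ mem_center_iff.mpr fun q ↦ ?_⟩
  obtain ⟨z, rfl⟩ := QuotientGroup.mk'_surjective N q
  have hconj : QuotientGroup.mk' N (x * z * x⁻¹) = QuotientGroup.mk' N z := hG' x hx _ z
  rw [map_mul, map_mul, map_inv] at hconj
  exact (mul_inv_eq_iff_eq_mul.mp hconj).symm

end ActionOnHoms

theorem stmt2_general (G : Type*) [Group G] (H : Subgroup G) [H.Normal]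
    (hFG : Group.FG H)
    (hRF : ∀ h : H, h ≠ 1 → ∃ N : Subgroup H, N.Normal ∧ N.FiniteIndex ∧ h ∉ N)
    (H₁ : Subgroup H) [H₁.FiniteIndex]
    (hab : ∀ x ∈ H₁, ∀ y ∈ H₁, x * y = y * x) :
    ∃ G' : Subgroup G, G'.Normal ∧ G'.FiniteIndex ∧
      ∀ x ∈ G' ⊓ H, ∀ y ∈ G' ⊓ H, x * y = y * x := by
  have : Group.ResiduallyFinite H := Group.residuallyFinite_iff_exists_finiteIndex.mpr fun h hh ↦
    let ⟨N, _, hN⟩ := hRF h hh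
    ⟨N, hN⟩
  have : IsMulCommutative H₁ := .of_setLike_mul_comm fun x hx y hy ↦ hab x hx y hy
  obtain ⟨N, _⟩ := exists_isMulCommutative_comap_center H₁
  obtain ⟨G', hnormal, hindex, hG'⟩ := exists_normal_finiteIndex_mem_comap_center H N.toSubgroup
  refine ⟨G', hnormal, hindex, fun x hx y hy ↦ ?_⟩
  exact congrArg Subtype.val <| setLike_mul_comm (hG' ⟨x, hx.2⟩ hx.1) (hG' ⟨y, hy.2⟩ hy.1)

/-- Proposition 3.3.0(2): if moreover `H₁` is torsion-free, then `G'` may be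
chosen so that `G' ∩ H` is abelian. -/
theorem stmt2 (G : Type*) [Group G] (H : Subgroup G) [H.Normal]
    (hFG : Group.FG H)
    (hRF : ∀ h : H, h ≠ 1 → ∃ N : Subgroup H, N.Normal ∧ N.FiniteIndex ∧ h ∉ N)
    (H₁ : Subgroup H) [H₁.Characteristic] [H₁.FiniteIndex]
    (hab : ∀ x ∈ H₁, ∀ y ∈ H₁, x * y = y * x)
    (htf : ∀ x ∈ H₁, ∀ n : ℕ, 0 < n → x ^ n = 1 → x = 1) :
    ∃ G' : Subgroup G, G'.Normal ∧ G'.FiniteIndex ∧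
      ∀ x ∈ G' ⊓ H, ∀ y ∈ G' ⊓ H, x * y = y * x :=
  stmt2_general G H hFG hRF H₁ hab
end

section
/- Let B be a group and A a subgroup of B such that A is contained in the center of B, A is torsion-free, A has finite index in B, and the commutator [x,y] = x y x⁻¹ y⁻¹ of any two elements x, y ∈ B lies in A (i.e., the quotient B/A is abelian). Then B is abelian. -/
section Commutator

open scoped commutatorElement

variable {G : Type*} [Group G]

theorem commutatorElement_pow_right_of_commute {x y : G} (h : Commute ⁅x, y⁆ y) (n : ℕ) :
    ⁅x, y ^ n⁆ = ⁅x, y⁆ ^ n := by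
  have conj_eq : x * y * x⁻¹ = ⁅x, y⁆ * y := by
    rw [commutatorElement_def, inv_mul_cancel_right]
  calc
    ⁅x, y ^ n⁆ = (x * y * x⁻¹) ^ n * (y ^ n)⁻¹ := by rw [commutatorElement_def, conj_pow]
    _ = ⁅x, y⁆ ^ n * y ^ n * (y ^ n)⁻¹ := by rw [conj_eq, h.mul_pow]
    _ = ⁅x, y⁆ ^ n := mul_inv_cancel_right _ _

theorem commutatorElement_pow_eq_one_iff_commute_pow {x y : G} {n : ℕ}
    (h : Commute ⁅x, y⁆ y) :
    ⁅x, y⁆ ^ n = 1 ↔ Commute x (y ^ n) := by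
  rw [← commutatorElement_pow_right_of_commute h, commutatorElement_eq_one_iff_commute]

theorem stmt3_general (A : Subgroup G) (hcentral : A ≤ Subgroup.center G)
    (htf : ∀ a ∈ A, ∀ n : ℕ, 0 < n → a ^ n = 1 → a = 1)
    (hpow : ∀ g : G, ∃ n : ℕ, 0 < n ∧ g ^ n ∈ A)
    (hcomm : ∀ g h : G, ⁅g, h⁆ ∈ A) (x y : G) :
    x * y = y * x := by
  have commute_of_mem {a : G} (ha : a ∈ A) (g : G) : Commute g a :=
    Subgroup.mem_center_iff.mp (hcentral ha) g
  obtain ⟨n, n_pos, pow_mem⟩ := hpow y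
  have commutator_pow_eq_one : ⁅x, y⁆ ^ n = 1 :=
    (commutatorElement_pow_eq_one_iff_commute_pow (commute_of_mem (hcomm x y) y).symm).mpr
      (commute_of_mem pow_mem x)
  exact commutatorElement_eq_one_iff_mul_comm.mp
    (htf _ (hcomm x y) n n_pos commutator_pow_eq_one)

end Commutator

/-- The Claim in the proof of Proposition 3.3.0(2): if `A` is a central,
torsion-free subgroup of finite index in `B` with `B/A` abelian (all commutators
lie in `A`), then `B` is abelian. -/
theorem stmt3 (B : Type*) [Group B] (A : Subgroup B)
    (hcentral : A ≤ Subgroup.center B)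
    (htf : ∀ x ∈ A, ∀ n : ℕ, 0 < n → x ^ n = 1 → x = 1)
    [A.FiniteIndex]
    (hcomm : ∀ x y : B, x * y * x⁻¹ * y⁻¹ ∈ A) :
    ∀ x y : B, x * y = y * x :=
  have hpow (g : B) : ∃ n : ℕ, 0 < n ∧ g ^ n ∈ A :=
    (A.exists_pow_mem_of_index_ne_zero Subgroup.FiniteIndex.index_ne_zero g).imp
      fun _ ⟨n_pos, _, pow_mem⟩ ↦ ⟨n_pos, pow_mem⟩
  stmt3_general A hcentral htf hpow hcomm
end
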